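/- Let k ≥ 1, v̄ > 0 and M > 0, and let q : (0,∞) → ℝ be measurable with v̄ ≤ q(y) ≤ M² for all y > 0. Let φ : [0,∞) → ℝ be continuous with φ(0) = 1, twice continuously differentiable on (0,∞), with φ and φ' square-integrable on (0,∞), with φ(y) → 0 and φ'(y) → 0 as y → ∞, with the one-sided derivative limit φ'(0+) existing, and satisfying −φ''(y) + k² q(y) φ(y) = 0 for all y > 0. Then: (i) −φ'(0+) = ∫_0^∞ (φ')² dy + k² ∫_0^∞ q φ² dy; (ii) φ'(0+) < 0 and |φ'(0+)| ≤ kM; (iii) ∫_0^∞ φ² dy ≤ M/(v̄ k). -/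

import Mathlib

open Real MeasureTheory Set Filter

/-!
Multiplying `φ'' = p φ` by `φ` gives `(φ φ')' = (φ')² + p φ² ≥ 0`. Hence `φ φ'` increases to its
limit `0` at infinity, so it is nonpositive, its derivative is automatically integrable, and
integrating that derivative over the half-line is the energy identity. If moreover `p ≤ K²`, then
`((φ')² - K² φ²)' = 2 (p - K²) φ φ' ≥ 0`, so `(φ')² - K² φ²` also increases to `0`, that is,
`|φ'| ≤ K |φ|`; at the endpoint this bounds the energy, and hence `∫ φ²`.
-/

open scoped Topology

section HalfLine

variable {a : ℝ} {f f' : ℝ → ℝ}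

lemma le_of_hasDerivAt_nonneg_of_tendsto_atTop {l : ℝ} (hf : ∀ x ∈ Ioi a, HasDerivAt f (f' x) x)
    (hf' : ∀ x ∈ Ioi a, 0 ≤ f' x) (hl : Tendsto f atTop (𝓝 l)) {x : ℝ} (hx : x ∈ Ioi a) :
    f x ≤ l := by
  have hmono : MonotoneOn f (Ioi a) := by
    refine monotoneOn_of_hasDerivWithinAt_nonneg (f' := f') (convex_Ioi a)
      (HasDerivAt.continuousOn hf) ?_ ?_ <;> rw [interior_Ioi]
    exacts [fun y hy => (hf y hy).hasDerivWithinAt, hf']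
  refine ge_of_tendsto hl ?_
  filter_upwards [eventually_ge_atTop x] with y hxy
  exact hmono hx (lt_of_lt_of_le hx hxy) hxy

lemma integrableOn_Ioi_deriv_of_nonneg_of_tendsto {l r : ℝ}
    (hf : ∀ x ∈ Ioi a, HasDerivAt f (f' x) x) (hf' : ∀ x ∈ Ioi a, 0 ≤ f' x)
    (hr : Tendsto f (𝓝[>] a) (𝓝 r)) (hl : Tendsto f atTop (𝓝 l)) :
    IntegrableOn f' (Ioi a) := by
  refine integrableOn_Ioi_deriv_of_nonneg (g := Function.update f a r) (l := l) ?_ ?_ hf' ?_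
  · rwa [continuousWithinAt_update_same, Ici_sdiff_left]
  · intro x hx
    refine (hf x hx).congr_of_eventuallyEq ?_
    filter_upwards [eventually_ne_nhds (ne_of_gt hx)] with y hy
    exact Function.update_of_ne hy r f
  · refine hl.congr' ?_
    filter_upwards [eventually_ne_atTop a] with y hy
    exact (Function.update_of_ne hy r f).symm

lemma setIntegral_Ioi_sq_pos_of_tendsto {c : ℝ} (hc : c ≠ 0) (hf : Tendsto f (𝓝[>] a) (𝓝 c))
    (hinteg : IntegrableOn (fun x => f x ^ 2) (Ioi a)) : 0 < ∫ x in Ioi a, f x ^ 2 := by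
  obtain ⟨b, hab, hne⟩ := mem_nhdsGT_iff_exists_Ioo_subset.1 (hf.eventually_ne hc)
  rw [setIntegral_pos_iff_support_of_nonneg_ae (ae_of_all _ fun x => sq_nonneg (f x)) hinteg]
  have hsub : Ioo a b ⊆ Function.support (fun x => f x ^ 2) ∩ Ioi a :=
    fun x hx => ⟨pow_ne_zero 2 (hne hx), hx.1⟩
  exact ((Measure.measure_Ioo_pos volume).2 hab).trans_le (measure_mono hsub)

end HalfLine

/-- A solution `φ`, with derivative `φ'`, of `φ'' = p φ` on the half-line `(a, ∞)` such that `φ` and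
`φ'` vanish at infinity. The equation is encoded as a first-order system for the pair `(φ, φ')`;
nothing is required at the endpoint `a`. -/
structure IsDecayingSolution (a : ℝ) (p φ φ' : ℝ → ℝ) : Prop where
  hasDerivAt : ∀ y ∈ Ioi a, HasDerivAt φ (φ' y) y
  hasDerivAt_deriv : ∀ y ∈ Ioi a, HasDerivAt φ' (p y * φ y) y
  tendsto_atTop : Tendsto φ atTop (𝓝 0)
  tendsto_deriv_atTop : Tendsto φ' atTop (𝓝 0)

namespace IsDecayingSolution

variable {a c d m K : ℝ} {p φ φ' : ℝ → ℝ}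

lemma of_contDiffOn (hφ : ContDiffOn ℝ 2 φ (Ioi a))
    (hode : ∀ y ∈ Ioi a, deriv (deriv φ) y = p y * φ y) (h0 : Tendsto φ atTop (𝓝 0))
    (h0' : Tendsto (deriv φ) atTop (𝓝 0)) : IsDecayingSolution a p φ (deriv φ) where
  hasDerivAt y hy :=
    ((hφ.differentiableOn two_ne_zero).differentiableAt (Ioi_mem_nhds hy)).hasDerivAt
  hasDerivAt_deriv y hy := by
    have hφ' : ContDiffOn ℝ 1 (deriv φ) (Ioi a) := hφ.deriv_of_isOpen isOpen_Ioi (by norm_num)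
    rw [← hode y hy]
    exact ((hφ'.differentiableOn one_ne_zero).differentiableAt (Ioi_mem_nhds hy)).hasDerivAt
  tendsto_atTop := h0
  tendsto_deriv_atTop := h0'

lemma hasDerivAt_mul_deriv (h : IsDecayingSolution a p φ φ') {y : ℝ} (hy : y ∈ Ioi a) :
    HasDerivAt (fun y => φ y * φ' y) (φ' y ^ 2 + p y * φ y ^ 2) y :=
  ((h.hasDerivAt y hy).fun_mul (h.hasDerivAt_deriv y hy)).congr_deriv (by ring)

lemma tendsto_mul_deriv_atTop (h : IsDecayingSolution a p φ φ') :
    Tendsto (fun y => φ y * φ' y) atTop (𝓝 0) := by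
  simpa only [mul_zero] using h.tendsto_atTop.mul h.tendsto_deriv_atTop

lemma energy_density_nonneg (hp : ∀ y ∈ Ioi a, 0 ≤ p y) {y : ℝ} (hy : y ∈ Ioi a) :
    0 ≤ φ' y ^ 2 + p y * φ y ^ 2 :=
  add_nonneg (sq_nonneg _) (mul_nonneg (hp y hy) (sq_nonneg _))

lemma mul_deriv_nonpos (h : IsDecayingSolution a p φ φ') (hp : ∀ y ∈ Ioi a, 0 ≤ p y) {y : ℝ}
    (hy : y ∈ Ioi a) : φ y * φ' y ≤ 0 :=
  le_of_hasDerivAt_nonneg_of_tendsto_atTop (f := fun y => φ y * φ' y)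
    (fun _ => h.hasDerivAt_mul_deriv) (fun _ => energy_density_nonneg hp)
    h.tendsto_mul_deriv_atTop hy

lemma abs_deriv_le (h : IsDecayingSolution a p φ φ') (hp : ∀ y ∈ Ioi a, 0 ≤ p y) (hK : 0 ≤ K)
    (hpK : ∀ y ∈ Ioi a, p y ≤ K ^ 2) {y : ℝ} (hy : y ∈ Ioi a) : |φ' y| ≤ K * |φ y| := by
  have hderiv : ∀ y ∈ Ioi a, HasDerivAt (fun y => φ' y ^ 2 - K ^ 2 * φ y ^ 2)
      (2 * ((K ^ 2 - p y) * -(φ y * φ' y))) y := fun y hy =>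
    (((h.hasDerivAt_deriv y hy).fun_pow 2).fun_sub
      (((h.hasDerivAt y hy).fun_pow 2).const_mul (K ^ 2))).congr_deriv (by push_cast; ring)
  have hderiv_nonneg : ∀ y ∈ Ioi a, 0 ≤ 2 * ((K ^ 2 - p y) * -(φ y * φ' y)) := fun y hy =>
    mul_nonneg two_pos.le <|
      mul_nonneg (sub_nonneg.2 (hpK y hy)) (neg_nonneg.2 (h.mul_deriv_nonpos hp hy))
  have hlim : Tendsto (fun y => φ' y ^ 2 - K ^ 2 * φ y ^ 2) atTop (𝓝 0) := by
    simpa using (h.tendsto_deriv_atTop.pow 2).sub ((h.tendsto_atTop.pow 2).const_mul (K ^ 2))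
  have hsq : φ' y ^ 2 ≤ (K * |φ y|) ^ 2 := by
    rw [mul_pow, sq_abs, ← sub_nonpos]
    exact le_of_hasDerivAt_nonneg_of_tendsto_atTop hderiv hderiv_nonneg hlim hy
  exact abs_le_of_sq_le_sq hsq (mul_nonneg hK (abs_nonneg _))

lemma abs_deriv_le_of_tendsto (h : IsDecayingSolution a p φ φ') (hp : ∀ y ∈ Ioi a, 0 ≤ p y)
    (hK : 0 ≤ K) (hpK : ∀ y ∈ Ioi a, p y ≤ K ^ 2) (hc : Tendsto φ (𝓝[>] a) (𝓝 c))
    (hd : Tendsto φ' (𝓝[>] a) (𝓝 d)) : |d| ≤ K * |c| :=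
  le_of_tendsto_of_tendsto hd.abs (hc.abs.const_mul K) <|
    eventually_mem_nhdsWithin.mono fun _ hy => h.abs_deriv_le hp hK hpK hy

section Energy

variable (h : IsDecayingSolution a p φ φ') (hc : Tendsto φ (𝓝[>] a) (𝓝 c))
  (hd : Tendsto φ' (𝓝[>] a) (𝓝 d))
include h hc hd

lemma integrableOn_energy_density (hp : ∀ y ∈ Ioi a, 0 ≤ p y) :
    IntegrableOn (fun y => φ' y ^ 2 + p y * φ y ^ 2) (Ioi a) :=
  integrableOn_Ioi_deriv_of_nonneg_of_tendsto (fun _ => h.hasDerivAt_mul_deriv)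
    (fun _ => energy_density_nonneg hp) (hc.mul hd) h.tendsto_mul_deriv_atTop

lemma integrableOn_deriv_sq (hp : ∀ y ∈ Ioi a, 0 ≤ p y) :
    IntegrableOn (fun y => φ' y ^ 2) (Ioi a) := by
  refine (h.integrableOn_energy_density hc hd hp).mono'
    (((HasDerivAt.continuousOn h.hasDerivAt_deriv).pow 2).aestronglyMeasurable
      measurableSet_Ioi) ?_
  filter_upwards [ae_restrict_mem measurableSet_Ioi] with y hy
  rw [Real.norm_of_nonneg (sq_nonneg _)]
  exact le_add_of_nonneg_right (mul_nonneg (hp y hy) (sq_nonneg _))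

lemma integrableOn_potential_mul_sq (hp : ∀ y ∈ Ioi a, 0 ≤ p y) :
    IntegrableOn (fun y => p y * φ y ^ 2) (Ioi a) :=
  ((h.integrableOn_energy_density hc hd hp).sub (h.integrableOn_deriv_sq hc hd hp)).congr_fun
    (fun _ _ => add_sub_cancel_left _ _) measurableSet_Ioi

lemma integrableOn_sq (hm : 0 < m) (hmp : ∀ y ∈ Ioi a, m ≤ p y) :
    IntegrableOn (fun y => φ y ^ 2) (Ioi a) := by
  have hp : ∀ y ∈ Ioi a, 0 ≤ p y := fun y hy => hm.le.trans (hmp y hy)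
  refine ((h.integrableOn_potential_mul_sq hc hd hp).const_mul m⁻¹).mono'
    (((HasDerivAt.continuousOn h.hasDerivAt).pow 2).aestronglyMeasurable measurableSet_Ioi) ?_
  filter_upwards [ae_restrict_mem measurableSet_Ioi] with y hy
  rw [Real.norm_of_nonneg (sq_nonneg _), le_inv_mul_iff₀ hm]
  exact mul_le_mul_of_nonneg_right (hmp y hy) (sq_nonneg _)

theorem energy_identity (hp : ∀ y ∈ Ioi a, 0 ≤ p y) :
    -(c * d) = (∫ y in Ioi a, φ' y ^ 2) + ∫ y in Ioi a, p y * φ y ^ 2 := by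
  have hdensity (y : ℝ) : φ' y * φ' y + φ y * (p y * φ y) = φ' y ^ 2 + p y * φ y ^ 2 := by ring
  have hinteg : IntegrableOn (φ' * φ' + φ * fun y => p y * φ y) (Ioi a) :=
    (h.integrableOn_energy_density hc hd hp).congr_fun (fun y _ => (hdensity y).symm)
      measurableSet_Ioi
  calc -(c * d) = ∫ y in Ioi a, φ' y * φ' y + φ y * (p y * φ y) := by
        rw [integral_Ioi_deriv_mul_eq_sub h.hasDerivAt h.hasDerivAt_deriv hinteg (hc.mul hd)
          h.tendsto_mul_deriv_atTop, zero_sub]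
    _ = ∫ y in Ioi a, φ' y ^ 2 + p y * φ y ^ 2 := by simp only [hdensity]
    _ = (∫ y in Ioi a, φ' y ^ 2) + ∫ y in Ioi a, p y * φ y ^ 2 :=
        integral_add (h.integrableOn_deriv_sq hc hd hp) (h.integrableOn_potential_mul_sq hc hd hp)

lemma mul_integral_sq_le (hm : 0 < m) (hmp : ∀ y ∈ Ioi a, m ≤ p y) :
    m * ∫ y in Ioi a, φ y ^ 2 ≤ -(c * d) := by
  have hp : ∀ y ∈ Ioi a, 0 ≤ p y := fun y hy => hm.le.trans (hmp y hy)
  calc m * ∫ y in Ioi a, φ y ^ 2 = ∫ y in Ioi a, m * φ y ^ 2 := (integral_const_mul _ _).symm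
    _ ≤ ∫ y in Ioi a, p y * φ y ^ 2 :=
        setIntegral_mono_on ((h.integrableOn_sq hc hd hm hmp).const_mul m)
          (h.integrableOn_potential_mul_sq hc hd hp) measurableSet_Ioi
          fun y hy => mul_le_mul_of_nonneg_right (hmp y hy) (sq_nonneg _)
    _ ≤ (∫ y in Ioi a, φ' y ^ 2) + ∫ y in Ioi a, p y * φ y ^ 2 :=
        le_add_of_nonneg_left (integral_nonneg fun y => sq_nonneg (φ' y))
    _ = -(c * d) := (h.energy_identity hc hd hp).symm

lemma boundary_mul_deriv_neg (hm : 0 < m) (hmp : ∀ y ∈ Ioi a, m ≤ p y) (hc0 : c ≠ 0) :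
    c * d < 0 :=
  neg_pos.1 <| (mul_pos hm <| setIntegral_Ioi_sq_pos_of_tendsto hc0 hc <|
    h.integrableOn_sq hc hd hm hmp).trans_le (h.mul_integral_sq_le hc hd hm hmp)

end Energy

end IsDecayingSolution

theorem decaying_mode_estimates_general {a k vbar M dp : ℝ} {q φ φ' : ℝ → ℝ} (hk : 0 < k)
    (hv : 0 < vbar) (hM : 0 ≤ M) (hqb : ∀ y ∈ Ioi a, vbar ≤ q y ∧ q y ≤ M ^ 2)
    (h : IsDecayingSolution a (fun y => k ^ 2 * q y) φ φ') (h1 : Tendsto φ (𝓝[>] a) (𝓝 1))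
    (hdp : Tendsto φ' (𝓝[>] a) (𝓝 dp)) :
    -dp = (∫ y in Ioi a, φ' y ^ 2) + k ^ 2 * (∫ y in Ioi a, q y * φ y ^ 2) ∧
    dp < 0 ∧ |dp| ≤ k * M ∧
    (∫ y in Ioi a, φ y ^ 2) ≤ M / (vbar * k) := by
  have hlower_pos : 0 < k ^ 2 * vbar := by positivity
  have hlower : ∀ y ∈ Ioi a, k ^ 2 * vbar ≤ k ^ 2 * q y :=
    fun y hy => mul_le_mul_of_nonneg_left (hqb y hy).1 (sq_nonneg k)
  have hnonneg : ∀ y ∈ Ioi a, 0 ≤ k ^ 2 * q y := fun y hy => hlower_pos.le.trans (hlower y hy)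
  have hupper : ∀ y ∈ Ioi a, k ^ 2 * q y ≤ (k * M) ^ 2 := fun y hy =>
    (mul_pow k M 2).symm ▸ mul_le_mul_of_nonneg_left (hqb y hy).2 (sq_nonneg k)
  have habs : |dp| ≤ k * M := by
    simpa using h.abs_deriv_le_of_tendsto hnonneg (by positivity) hupper h1 hdp
  refine ⟨?_, ?_, habs, ?_⟩
  · simpa only [one_mul, mul_assoc, integral_const_mul] using h.energy_identity h1 hdp hnonneg
  · simpa only [one_mul] using h.boundary_mul_deriv_neg h1 hdp hlower_pos hlower one_ne_zero
  · have hmass : k * (vbar * k * ∫ y in Ioi a, φ y ^ 2) ≤ k * M :=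
      calc k * (vbar * k * ∫ y in Ioi a, φ y ^ 2) = k ^ 2 * vbar * ∫ y in Ioi a, φ y ^ 2 := by ring
        _ ≤ -dp := by simpa only [one_mul] using h.mul_integral_sq_le h1 hdp hlower_pos hlower
        _ ≤ k * M := (neg_le_abs dp).trans habs
    exact (le_div_iff₀' (by positivity)).2 (le_of_mul_le_mul_left hmass hk)

/-- For `v̄ ≤ q ≤ M²` on `(0,∞)` and a decaying solution `φ` of `-φ'' + k²qφ = 0` on `(0,∞)`
with `φ(0) = 1` and one-sided derivative `dp = φ'(0⁺)`:
(i) `-φ'(0⁺) = ∫_0^∞ (φ')² + k²∫_0^∞ qφ²`;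
(ii) `φ'(0⁺) < 0` and `|φ'(0⁺)| ≤ kM`;
(iii) `∫_0^∞ φ² ≤ M/(v̄k)`. -/
theorem decaying_mode_estimates (k : ℕ) (hk : 1 ≤ k) (vbar M : ℝ)
    (hv : 0 < vbar) (hM : 0 < M)
    (q : ℝ → ℝ) (hq : Measurable q)
    (hqb : ∀ y : ℝ, 0 < y → vbar ≤ q y ∧ q y ≤ M ^ 2)
    (φ : ℝ → ℝ) (dp : ℝ)
    (hcont : ContinuousOn φ (Ici 0)) (hφ0 : φ 0 = 1)
    (hC2 : ContDiffOn ℝ 2 φ (Ioi 0))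
    (hsq : IntegrableOn (fun y => (φ y) ^ 2) (Ioi 0))
    (hsq' : IntegrableOn (fun y => (deriv φ y) ^ 2) (Ioi 0))
    (hdec : Tendsto φ atTop (nhds 0)) (hdec' : Tendsto (deriv φ) atTop (nhds 0))
    (hdp : Tendsto (deriv φ) (nhdsWithin 0 (Ioi 0)) (nhds dp))
    (hode : ∀ y : ℝ, 0 < y → -(deriv (deriv φ) y) + (k : ℝ) ^ 2 * q y * φ y = 0) :
    -dp = (∫ y in Ioi (0 : ℝ), (deriv φ y) ^ 2) +
        (k : ℝ) ^ 2 * (∫ y in Ioi (0 : ℝ), q y * (φ y) ^ 2) ∧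
    dp < 0 ∧ |dp| ≤ (k : ℝ) * M ∧
    (∫ y in Ioi (0 : ℝ), (φ y) ^ 2) ≤ M / (vbar * (k : ℝ)) := by
  have hsol : IsDecayingSolution 0 (fun y => (k : ℝ) ^ 2 * q y) φ (deriv φ) :=
    .of_contDiffOn hC2 (fun y hy => by linarith [hode y hy]) hdec hdec'
  have h1 : Tendsto φ (𝓝[>] 0) (𝓝 1) := hφ0 ▸ (hcont 0 self_mem_Ici).mono Ioi_subset_Ici_self
  exact decaying_mode_estimates_general (Nat.cast_pos.2 hk) hv hM.le hqb hsol h1 hdp
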